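/- Let r ≥ 3 and let G be a finite simple r-regular graph with at least one vertex. Let X ⊆ V(G) be a feedback vertex set of G, i.e., the subgraph of G induced by V(G) \ X is acyclic. Then (r − 2) · |V(G)| + 2 ≤ 2r · |X|. -/

import Mathlib

open scoped Classical

/-!
The edges of `G` avoiding `X` form a forest on `V \ X`, so if `X ≠ V` there are fewer of them than
vertices outside `X`; every other edge is counted by the degree of an endpoint in `X`. Hence
`|E| + |X| < |V| + ∑ v ∈ X, deg v`, which for `X = V` just says that `G` has an edge. The handshake
lemma turns this bound on `|E|` into one on degrees.
-/

theorem card_edgeFinset_lt_card_of_isAcyclic {V : Type*} [Fintype V] [Nonempty V]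
    {F : SimpleGraph V} [Fintype F.edgeSet] (hF : F.IsAcyclic) :
    F.edgeFinset.card < Fintype.card V := by
  obtain ⟨T, hFT, -, hT⟩ :=
    SimpleGraph.connected_top.exists_isTree_le_of_le_of_isAcyclic (le_top : F ≤ ⊤) hF
  calc F.edgeFinset.card ≤ T.edgeFinset.card :=
        Finset.card_le_card (SimpleGraph.edgeFinset_mono hFT)
    _ < T.edgeFinset.card + 1 := Nat.lt_succ_self _
    _ = Fintype.card V := hT.card_edgeFinset

section

variable {V : Type*} [Fintype V] {G : SimpleGraph V} [DecidableRel G.Adj] {X : Finset V}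

variable (G X) in
theorem card_edgeFinset_le_card_edgeFinset_induce_add_sum_degree :
    G.edgeFinset.card ≤
      (G.induce {v : V | v ∉ X}).edgeFinset.card + ∑ v ∈ X, G.degree v := by
  have hcover : G.edgeFinset ⊆
      (G.induce {v : V | v ∉ X}).edgeFinset.map
          (Function.Embedding.subtype (· ∈ {v : V | v ∉ X})).sym2Map ∪
        X.biUnion fun v => G.incidenceFinset v := by
    intro e he
    by_cases hinc : ∃ v ∈ X, v ∈ e
    · obtain ⟨v, hvX, hve⟩ := hinc
      exact Finset.mem_union_right _ <| Finset.mem_biUnion.2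
        ⟨v, hvX, (G.mem_incidenceFinset v e).2 ⟨SimpleGraph.mem_edgeFinset.1 he, hve⟩⟩
    · push Not at hinc
      refine Finset.mem_union_left _ ?_
      rw [SimpleGraph.map_edgeFinset_induce, Finset.mem_inter, Finset.mem_sym2_iff]
      exact ⟨he, fun v hve => Set.mem_toFinset.2 fun hvX => hinc v hvX hve⟩
  calc G.edgeFinset.card
      ≤ _ := (Finset.card_le_card hcover).trans (Finset.card_union_le _ _)
    _ ≤ (G.induce {v : V | v ∉ X}).edgeFinset.card + ∑ v ∈ X, (G.incidenceFinset v).card := by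
        rw [Finset.card_map]
        gcongr
        exact Finset.card_biUnion_le
    _ = _ := by simp only [SimpleGraph.card_incidenceFinset_eq_degree]

theorem card_edgeFinset_add_card_lt_of_isAcyclic_induce (hG : G ≠ ⊥)
    (hX : (G.induce {v : V | v ∉ X}).IsAcyclic) :
    G.edgeFinset.card + X.card < Fintype.card V + ∑ v ∈ X, G.degree v := by
  rcases isEmpty_or_nonempty {v : V | v ∉ X} with hempty | hnonempty
  · have hXuniv : X = Finset.univ := Finset.eq_univ_iff_forall.2 fun v =>
      not_not.1 fun hv => hempty.false ⟨v, hv⟩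
    have hedges : 0 < G.edgeFinset.card :=
      Finset.card_pos.2 (SimpleGraph.edgeFinset_nonempty.2 hG)
    rw [hXuniv, G.sum_degrees_eq_twice_card_edges, Finset.card_univ]
    omega
  · have hforest := card_edgeFinset_lt_card_of_isAcyclic hX
    have hcompl : Fintype.card {v : V | v ∉ X} + X.card = Fintype.card V := by
      rw [Fintype.card_of_subtype Xᶜ (by simp), X.card_compl_add_card]
    have hcover := card_edgeFinset_le_card_edgeFinset_induce_add_sum_degree G X
    omega

theorem stmt_16_general [Nonempty V] {δ Δ : ℕ} (hδ : 2 ≤ δ) (hmin : ∀ v, δ ≤ G.degree v)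
    (hmax : ∀ v ∈ X, G.degree v ≤ Δ) (hX : (G.induce {v : V | v ∉ X}).IsAcyclic) :
    (δ - 2) * Fintype.card V + 2 ≤ (δ - 2 + Δ) * X.card := by
  have hG : G ≠ ⊥ := by
    obtain ⟨v⟩ := ‹Nonempty V›
    obtain ⟨w, hvw⟩ := (G.degree_pos_iff_exists_adj v).1 (by have := hmin v; omega)
    exact SimpleGraph.ne_bot_iff_exists_adj.2 ⟨v, w, hvw⟩
  have hedges := card_edgeFinset_add_card_lt_of_isAcyclic_induce hG hX
  have hhandshake : ∑ v ∈ X, G.degree v + ∑ v ∈ Xᶜ, G.degree v = 2 * G.edgeFinset.card := by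
    rw [Finset.sum_add_sum_compl, G.sum_degrees_eq_twice_card_edges]
  have hinside : ∑ v ∈ X, G.degree v ≤ X.card * Δ := Finset.sum_le_card_nsmul _ _ _ hmax
  have houtside : Xᶜ.card * δ ≤ ∑ v ∈ Xᶜ, G.degree v :=
    Finset.card_nsmul_le_sum _ _ _ fun v _ => hmin v
  have hcard := X.card_add_card_compl
  obtain ⟨d, rfl⟩ := Nat.exists_eq_add_of_le' hδ
  have hcompl : d * Xᶜ.card + 2 ≤ Δ * X.card := by linarith
  calc (d + 2 - 2) * Fintype.card V + 2
      = d * X.card + (d * Xᶜ.card + 2) := by rw [Nat.add_sub_cancel, ← hcard]; ring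
    _ ≤ d * X.card + Δ * X.card := by gcongr
    _ = (d + 2 - 2 + Δ) * X.card := by rw [Nat.add_sub_cancel, add_mul]

end

/-- if `G` is a nonempty `r`-regular graph with `r ≥ 3` and `X` is a
feedback vertex set of `G`, then `(r - 2) · |V(G)| + 2 ≤ 2r · |X|`. -/
theorem stmt_16 {V : Type*} [Fintype V] [Nonempty V] (G : SimpleGraph V)
    (r : ℕ) (hr : 3 ≤ r) (hreg : ∀ v : V, G.degree v = r)
    (X : Finset V)
    (hX : (G.induce {v : V | v ∉ X}).IsAcyclic) :
    (r - 2) * Fintype.card V + 2 ≤ 2 * r * X.card :=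
  (stmt_16_general (by omega) (fun v => (hreg v).ge) (fun v _ => (hreg v).le) hX).trans
    (Nat.mul_le_mul_right _ (by omega))
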